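/- Let Q ∈ L²_loc(ℝ,ℂ), τ ∈ L¹_loc(ℝ,ℂ). Let u, w : ℝ → ℂ be locally absolutely continuous with u' = w + Qu a.e., and define a.e. l[u] := −w' − Q·u' + τ·u. Let φ : ℝ → ℝ be smooth with compact support. Then the function φu together with the function w_φ := φ'u + φw is again locally absolutely continuous with (φu)' = w_φ + Q(φu) a.e. (i.e. w_φ is the quasi-derivative of φu), and a.e. l[φu] = φ·l[u] − φ''·u − 2φ'·u'. In particular, if u ∈ L²(ℝ) and l[u] ∈ L²(ℝ), then φu ∈ L²(ℝ) has compact support and l[φu] ∈ L²(ℝ). -/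

import Mathlib

open MeasureTheory Filter Topology

/-- The Shin–Zettl quasi-differential expression `l[u] = -(u^{[1]})' - Q u' + τ u`,
written in terms of the quasi-derivative `w = u^{[1]} = u' - Qu` (so that `u' = w + Qu`)
and the a.e. derivative `dw` of `w`. -/
noncomputable def qdL (Q τ u w dw : ℝ → ℂ) (x : ℝ) : ℂ :=
  -dw x - Q x * (w x + Q x * u x) + τ x * u x

/-- The formally adjoint quasi-differential expression
`l⁺[v] = -( (v^{{1}})' + conj(Q) v^{{1}} + (conj(Q)² - conj(τ)) v )`, written in terms of
the adjoint quasi-derivative `z = v^{{1}} = v' - conj(Q)v` and the a.e. derivative `dz`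
of `z`. -/
noncomputable def qdLplus (Q τ v z dz : ℝ → ℂ) (x : ℝ) : ℂ :=
  -(dz x + (starRingEnd ℂ) (Q x) * z x
      + (((starRingEnd ℂ) (Q x)) ^ 2 - (starRingEnd ℂ) (τ x)) * v x)

/-- The bracket `[u,v](t) = u(t) conj(v^{{1}}(t)) - u^{[1]}(t) conj(v(t))`. -/
noncomputable def qdBracket (u w v z : ℝ → ℂ) (t : ℝ) : ℂ :=
  u t * (starRingEnd ℂ) (z t) - w t * (starRingEnd ℂ) (v t)

/-- The quasi-derivative `(φu)^{[1]} = φ'u + φ u^{[1]}` of the product `φu`. -/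
noncomputable def wPhi (u w : ℝ → ℂ) (φ : ℝ → ℝ) (x : ℝ) : ℂ :=
  Complex.ofReal (deriv φ x) * u x + Complex.ofReal (φ x) * w x

/-- The a.e. derivative of `(φu)^{[1]}`, computed from `u' = w + Qu` and `w' = dw`. -/
noncomputable def dwPhi (Q u w dw : ℝ → ℂ) (φ : ℝ → ℝ) (x : ℝ) : ℂ :=
  Complex.ofReal (deriv (deriv φ) x) * u x
    + Complex.ofReal (deriv φ x) * (w x + Q x * u x)
    + Complex.ofReal (deriv φ x) * w x + Complex.ofReal (φ x) * dw x

/-!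
A primitive of a locally integrable function is absolutely continuous on compact intervals, and such
a function is determined up to a constant by its a.e. derivative. Hence the product rule holds for
such functions in integrated form; applied to `φu`, to `φ'u` and to `φw` it yields both claims of
local absolute continuity. Since `u' = w + Qu` is locally `L²`, each term of
`φ l[u] - φ''u - 2φ'u'` is the product of a continuous compactly supported function with a function
that is `L²` on the support of `φ`.
-/

theorem absolutelyContinuousOnInterval_of_dist_le {X Y : Type*} [PseudoMetricSpace X]
    [PseudoMetricSpace Y] {f : ℝ → X} {g : ℝ → Y} {a b : ℝ}
    (hg : AbsolutelyContinuousOnInterval g a b)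
    (hfg : ∀ x ∈ Set.uIcc a b, ∀ y ∈ Set.uIcc a b, dist (f x) (f y) ≤ dist (g x) (g y)) :
    AbsolutelyContinuousOnInterval f a b := by
  refine squeeze_zero' (Eventually.of_forall fun _ => Finset.sum_nonneg fun _ _ => dist_nonneg)
    (eventually_inf_principal.2 (Eventually.of_forall fun I hI => ?_)) hg
  exact Finset.sum_le_sum fun i hi => hfg _ (hI.1 i hi).1 _ (hI.1 i hi).2

theorem absolutelyContinuousOnInterval_integral {E : Type*} [NormedAddCommGroup E]
    [NormedSpace ℝ E] {f : ℝ → E} {a b c : ℝ} (hf : IntervalIntegrable f volume a b)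
    (hc : c ∈ Set.uIcc a b) :
    AbsolutelyContinuousOnInterval (fun x => ∫ s in c..x, f s) a b := by
  refine absolutelyContinuousOnInterval_of_dist_le
    (hf.norm.absolutelyContinuousOnInterval_intervalIntegral hc) fun x hx y hy => ?_
  have integrable_on {z : ℝ} (hz : z ∈ Set.uIcc a b) : IntervalIntegrable f volume c z :=
    hf.mono_set (Set.uIcc_subset_uIcc hc hz)
  rw [dist_eq_norm, Real.dist_eq,
    intervalIntegral.integral_interval_sub_left (integrable_on hx) (integrable_on hy),
    intervalIntegral.integral_interval_sub_left (integrable_on hx).norm (integrable_on hy).norm]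
  exact intervalIntegral.norm_integral_le_abs_integral_norm

/-- `HasLocACDeriv f f'` says that `f` is locally absolutely continuous with a.e. derivative `f'`,
encoded as `f` being a primitive of the locally integrable function `f'`. The base point `0` of the
primitive is immaterial. -/
structure HasLocACDeriv {E : Type*} [NormedAddCommGroup E] [NormedSpace ℝ E] (f f' : ℝ → E) :
    Prop where
  locallyIntegrable : LocallyIntegrable f' volume
  eq_add_integral (x : ℝ) : f x = f 0 + ∫ s in (0 : ℝ)..x, f' s

namespace HasLocACDeriv

variable {E : Type*} [NormedAddCommGroup E] [NormedSpace ℝ E] {f f' g g' : ℝ → E}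

theorem intervalIntegrable (h : HasLocACDeriv f f') (a b : ℝ) :
    IntervalIntegrable f' volume a b :=
  (h.locallyIntegrable.integrableOn_isCompact isCompact_uIcc).intervalIntegrable

theorem continuous (h : HasLocACDeriv f f') : Continuous f := by
  rw [funext h.eq_add_integral]
  exact continuous_const.add (intervalIntegral.continuous_primitive h.intervalIntegrable 0)

theorem absolutelyContinuousOnInterval (h : HasLocACDeriv f f') (x : ℝ) :
    AbsolutelyContinuousOnInterval f 0 x := by
  rw [funext h.eq_add_integral]
  exact contDiffOn_const.absolutelyContinuousOnInterval.fun_add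
    (absolutelyContinuousOnInterval_integral (h.intervalIntegrable 0 x) Set.left_mem_uIcc)

theorem add (hf : HasLocACDeriv f f') (hg : HasLocACDeriv g g') :
    HasLocACDeriv (fun x => f x + g x) (fun x => f' x + g' x) where
  locallyIntegrable := hf.locallyIntegrable.add hg.locallyIntegrable
  eq_add_integral x := by
    rw [intervalIntegral.integral_add (hf.intervalIntegrable 0 x) (hg.intervalIntegrable 0 x),
      hf.eq_add_integral x, hg.eq_add_integral x]
    abel

variable [CompleteSpace E]

theorem of_contDiff (hf : ContDiff ℝ 1 f) : HasLocACDeriv f (deriv f) where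
  locallyIntegrable := (hf.continuous_deriv le_rfl).locallyIntegrable
  eq_add_integral x := by
    rw [intervalIntegral.integral_deriv_eq_sub (fun y _ => hf.differentiable one_ne_zero y)
      ((hf.continuous_deriv le_rfl).intervalIntegrable 0 x), add_sub_cancel]

theorem ae_hasDerivAt (h : HasLocACDeriv f f') : ∀ᵐ x, HasDerivAt f (f' x) x := by
  filter_upwards [LocallyIntegrable.ae_hasDerivAt_integral h.locallyIntegrable] with x hx
  rw [funext h.eq_add_integral]
  exact (hx 0).const_add (f 0)

theorem of_ae_hasDerivAt (hf : ∀ x, AbsolutelyContinuousOnInterval f 0 x)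
    (hf' : LocallyIntegrable f' volume) (hderiv : ∀ᵐ x, HasDerivAt f (f' x) x) :
    HasLocACDeriv f f' where
  locallyIntegrable := hf'
  eq_add_integral x := by
    have primitive : HasLocACDeriv (fun y => ∫ s in (0 : ℝ)..y, f' s) f' :=
      ⟨hf', fun y => by rw [intervalIntegral.integral_same, zero_add]⟩
    have sub_hasDerivAt_zero : ∀ᵐ y, y ∈ Set.uIcc 0 x →
        HasDerivAt (fun z => f z - ∫ s in (0 : ℝ)..z, f' s) 0 y := by
      filter_upwards [hderiv, primitive.ae_hasDerivAt] with y hfy hprim _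
      simpa only [sub_self] using hfy.fun_sub hprim
    obtain ⟨C, hC⟩ := ((hf x).fun_sub
      (primitive.absolutelyContinuousOnInterval x)).const_of_ae_hasDerivAt_zero sub_hasDerivAt_zero
    have value_at_zero : f 0 = C := by
      simpa only [intervalIntegral.integral_same, sub_zero] using hC 0 Set.left_mem_uIcc
    rw [value_at_zero, ← hC x Set.right_mem_uIcc, sub_add_cancel]

theorem smul {𝕜 : Type*} [NormedField 𝕜] [NormedAlgebra ℝ 𝕜] [CompleteSpace 𝕜]
    [NormedSpace 𝕜 E] [IsScalarTower ℝ 𝕜 E] {c c' : ℝ → 𝕜}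
    (hc : HasLocACDeriv c c') (hf : HasLocACDeriv f f') :
    HasLocACDeriv (fun x => c x • f x) (fun x => c' x • f x + c x • f' x) := by
  refine of_ae_hasDerivAt
    (fun x => (hc.absolutelyContinuousOnInterval x).fun_smul (hf.absolutelyContinuousOnInterval x))
    ((hc.locallyIntegrable.smul_continuous hf.continuous).add
      (hf.locallyIntegrable.continuous_smul hc.continuous)) ?_
  filter_upwards [hc.ae_hasDerivAt, hf.ae_hasDerivAt] with x hcx hfx
  rw [add_comm]
  exact hcx.fun_smul hfx

end HasLocACDeriv

section MemLp

open scoped ENNReal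

variable {X : Type*} [TopologicalSpace X] [MeasurableSpace X] [OpensMeasurableSpace X]
  {μ : Measure X} {p : ℝ≥0∞} {K : Set X}

theorem memLp_smul_of_hasCompactSupport {R E : Type*} [NormedRing R] [NormedAddCommGroup E]
    [MulActionWithZero R E] [IsBoundedSMul R E] {g : X → R} {f : X → E} (hg : Continuous g)
    (hgc : HasCompactSupport g) (hf : MemLp f p (μ.restrict (tsupport g))) :
    MemLp (fun x => g x • f x) p μ := by
  have on_tsupport : MemLp (g • f) p (μ.restrict (tsupport g)) :=
    hf.smul (hg.memLp_top_of_hasCompactSupport hgc _)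
  have indicator_eq : (tsupport g).indicator (g • f) = g • f :=
    Set.indicator_eq_self.2 ((Function.support_smul_subset_left g f).trans (subset_tsupport g))
  rwa [← memLp_indicator_iff_restrict (isClosed_tsupport g).measurableSet, indicator_eq]
    at on_tsupport

theorem memLp_restrict_of_continuous_of_isCompact {E : Type*} [NormedAddCommGroup E]
    [T2Space X] [SecondCountableTopologyEither X E] [IsFiniteMeasureOnCompacts μ] {f : X → E}
    (hf : Continuous f) (hK : IsCompact K) : MemLp f p (μ.restrict K) := by
  have : IsFiniteMeasure (μ.restrict K) := isFiniteMeasure_restrict.2 hK.measure_ne_top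
  obtain ⟨C, hC⟩ := hK.exists_bound_of_continuousOn hf.continuousOn
  exact MemLp.of_bound hf.aestronglyMeasurable C (ae_restrict_of_forall_mem hK.measurableSet hC)

theorem memLp_two_smul_restrict_of_isCompact {𝕜 E : Type*} [NormedDivisionRing 𝕜]
    [NormedAddCommGroup E] [Module 𝕜 E] [NormSMulClass 𝕜 E] [LocallyCompactSpace X] [T2Space X]
    {f : X → 𝕜} {g : X → E} (hf : LocallyIntegrable (fun x => ‖f x‖ ^ 2) μ)
    (hg : Continuous g) (hfg : AEStronglyMeasurable (fun x => f x • g x) μ) (hK : IsCompact K) :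
    MemLp (fun x => f x • g x) 2 (μ.restrict K) := by
  rw [memLp_two_iff_integrable_sq_norm hfg.restrict]
  simp only [norm_smul, mul_pow]
  exact (hf.mul_continuous (hg.norm.pow 2)).integrableOn_isCompact hK

end MemLp

section Cutoff

variable {Q τ u w dw : ℝ → ℂ} {φ : ℝ → ℝ}

theorem hasLocACDeriv_cutoff_mul (hφ : ContDiff ℝ 1 φ)
    (hu : HasLocACDeriv u (fun s => w s + Q s * u s)) :
    HasLocACDeriv (fun x => (φ x : ℂ) * u x)
      (fun s => wPhi u w φ s + Q s * ((φ s : ℂ) * u s)) := by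
  convert! (HasLocACDeriv.of_contDiff hφ).smul hu using 2 with s
  simp only [wPhi, Complex.real_smul]
  ring

theorem hasLocACDeriv_wPhi (hφ : ContDiff ℝ 2 φ)
    (hu : HasLocACDeriv u (fun s => w s + Q s * u s)) (hw : HasLocACDeriv w dw) :
    HasLocACDeriv (wPhi u w φ) (dwPhi Q u w dw φ) := by
  have deriv_smul_u := (HasLocACDeriv.of_contDiff hφ.deriv').smul hu
  have smul_w := (HasLocACDeriv.of_contDiff (hφ.of_le one_le_two)).smul hw
  convert! deriv_smul_u.add smul_w using 2 with s
  simp only [dwPhi, Complex.real_smul]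
  ring

theorem qdL_cutoff_mul (Q τ u w dw : ℝ → ℂ) (φ : ℝ → ℝ) (x : ℝ) :
    qdL Q τ (fun y => (φ y : ℂ) * u y) (wPhi u w φ) (dwPhi Q u w dw φ) x =
      (φ x : ℂ) * qdL Q τ u w dw x - ((deriv (deriv φ) x : ℝ) : ℂ) * u x
        - 2 * ((deriv φ x : ℝ) : ℂ) * (w x + Q x * u x) := by
  simp only [qdL, wPhi, dwPhi]
  ring

theorem memLp_two_add_mul_restrict_of_isCompact {K : Set ℝ}
    (hQ : LocallyIntegrable (fun s => ‖Q s‖ ^ 2) volume)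
    (hu : HasLocACDeriv u (fun s => w s + Q s * u s)) (hw : Continuous w) (hK : IsCompact K) :
    MemLp (fun s => w s + Q s * u s) 2 (volume.restrict K) := by
  have measurable_Q_mul_u : AEStronglyMeasurable (fun s => Q s * u s) volume := by
    simpa only [add_sub_cancel_left, Pi.sub_apply] using
      hu.locallyIntegrable.aestronglyMeasurable.fun_sub hw.aestronglyMeasurable
  exact (memLp_restrict_of_continuous_of_isCompact hw hK).add
    (memLp_two_smul_restrict_of_isCompact hQ hu.continuous measurable_Q_mul_u hK)

theorem memLp_qdL_cutoff_mul {p : ENNReal} (hφ : ContDiff ℝ 2 φ) (hφc : HasCompactSupport φ)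
    (hu : Continuous u)
    (hu' : MemLp (fun s => w s + Q s * u s) p (volume.restrict (tsupport φ)))
    (hl : MemLp (qdL Q τ u w dw) p (volume.restrict (tsupport φ))) :
    MemLp (qdL Q τ (fun y => (φ y : ℂ) * u y) (wPhi u w φ) (dwPhi Q u w dw φ)) p volume := by
  have hφ' : ContDiff ℝ 1 (deriv φ) := hφ.deriv'
  have memLp_smul_qdL := memLp_smul_of_hasCompactSupport hφ.continuous hφc hl
  have memLp_deriv_deriv_smul : MemLp (fun x => deriv (deriv φ) x • u x) p volume :=
    ((hφ'.continuous_deriv le_rfl).smul hu).memLp_of_hasCompactSupport hφc.deriv.deriv.smul_right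
  have memLp_deriv_smul := memLp_smul_of_hasCompactSupport hφ'.continuous hφc.deriv
    (hu'.mono_measure (Measure.restrict_mono tsupport_deriv_subset le_rfl))
  convert! (memLp_smul_qdL.sub memLp_deriv_deriv_smul).sub (memLp_deriv_smul.const_mul 2)
    using 1
  ext x
  simp only [qdL_cutoff_mul, Pi.sub_apply, Complex.real_smul, mul_assoc]

end Cutoff

theorem cutoff_in_preminimal_domain_general {Q τ u w dw : ℝ → ℂ} {φ : ℝ → ℝ}
    (hQ : LocallyIntegrable (fun s => ‖Q s‖ ^ 2) volume)
    (hu : HasLocACDeriv u (fun s => w s + Q s * u s)) (hw : HasLocACDeriv w dw)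
    (hφ : ContDiff ℝ 2 φ) (hφc : HasCompactSupport φ) :
    HasLocACDeriv (fun x => (φ x : ℂ) * u x)
      (fun s => wPhi u w φ s + Q s * ((φ s : ℂ) * u s)) ∧
    HasLocACDeriv (wPhi u w φ) (dwPhi Q u w dw φ) ∧
    (∀ x, qdL Q τ (fun y => (φ y : ℂ) * u y) (wPhi u w φ) (dwPhi Q u w dw φ) x =
      (φ x : ℂ) * qdL Q τ u w dw x - ((deriv (deriv φ) x : ℝ) : ℂ) * u x
        - 2 * ((deriv φ x : ℝ) : ℂ) * (w x + Q x * u x)) ∧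
    MemLp (fun x => (φ x : ℂ) * u x) 2 volume ∧
    HasCompactSupport (fun x => (φ x : ℂ) * u x) ∧
    (MemLp (qdL Q τ u w dw) 2 (volume.restrict (tsupport φ)) →
      MemLp (qdL Q τ (fun y => (φ y : ℂ) * u y) (wPhi u w φ) (dwPhi Q u w dw φ)) 2 volume) := by
  have product := hasLocACDeriv_cutoff_mul (hφ.of_le one_le_two) hu
  have compactSupport : HasCompactSupport (fun x => (φ x : ℂ) * u x) :=
    (hφc.comp_left Complex.ofReal_zero).mul_right
  exact ⟨product, hasLocACDeriv_wPhi hφ hu hw, qdL_cutoff_mul Q τ u w dw φ,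
    product.continuous.memLp_of_hasCompactSupport compactSupport, compactSupport,
    memLp_qdL_cutoff_mul hφ hφc hu.continuous
      (memLp_two_add_mul_restrict_of_isCompact hQ hu hw.continuous hφc)⟩

/-- Multiplying by a smooth compactly supported cutoff `φ`: the product `φu` is again
locally absolutely continuous with quasi-derivative `φ'u + φw`, the latter is locally
absolutely continuous, and `l[φu] = φ l[u] - φ'' u - 2φ' u'`. In particular, if
`u, l[u] ∈ L²(ℝ)`, then `φu ∈ L²(ℝ)` has compact support and `l[φu] ∈ L²(ℝ)`,
i.e. `φu` lies in the domain of the preminimal operator. -/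
theorem cutoff_in_preminimal_domain (Q τ u w dw : ℝ → ℂ)
    (hQmeas : AEStronglyMeasurable Q volume)
    (hQ : LocallyIntegrable (fun s => ‖Q s‖ ^ 2) volume)
    (hτ : LocallyIntegrable τ volume)
    (hu' : LocallyIntegrable (fun s => w s + Q s * u s) volume)
    (hu : ∀ x : ℝ, u x = u 0 + ∫ s in (0:ℝ)..x, (w s + Q s * u s))
    (hdw : LocallyIntegrable dw volume)
    (hw : ∀ x : ℝ, w x = w 0 + ∫ s in (0:ℝ)..x, dw s)
    (φ : ℝ → ℝ) (hφ : ContDiff ℝ (⊤ : ℕ∞) φ) (hφc : HasCompactSupport φ) :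
    LocallyIntegrable (fun s => wPhi u w φ s + Q s * (Complex.ofReal (φ s) * u s)) volume ∧
    (∀ x : ℝ, Complex.ofReal (φ x) * u x =
        Complex.ofReal (φ 0) * u 0
          + ∫ s in (0:ℝ)..x, (wPhi u w φ s + Q s * (Complex.ofReal (φ s) * u s))) ∧
    LocallyIntegrable (dwPhi Q u w dw φ) volume ∧
    (∀ x : ℝ, wPhi u w φ x = wPhi u w φ 0 + ∫ s in (0:ℝ)..x, dwPhi Q u w dw φ s) ∧
    (∀ x : ℝ, qdL Q τ (fun y => Complex.ofReal (φ y) * u y) (wPhi u w φ)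
          (dwPhi Q u w dw φ) x =
        Complex.ofReal (φ x) * qdL Q τ u w dw x
          - Complex.ofReal (deriv (deriv φ) x) * u x
          - 2 * Complex.ofReal (deriv φ x) * (w x + Q x * u x)) ∧
    (MemLp u 2 volume → MemLp (qdL Q τ u w dw) 2 volume →
      MemLp (fun x => Complex.ofReal (φ x) * u x) 2 volume ∧
      HasCompactSupport (fun x => Complex.ofReal (φ x) * u x) ∧
      MemLp (qdL Q τ (fun y => Complex.ofReal (φ y) * u y) (wPhi u w φ)
        (dwPhi Q u w dw φ)) 2 volume) := by
  obtain ⟨hφu, hwφ, identity, memLp, compactSupport, memLp_qdL⟩ :=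
    cutoff_in_preminimal_domain_general (τ := τ) hQ ⟨hu', hu⟩ ⟨hdw, hw⟩ (contDiff_infty.1 hφ 2) hφc
  exact ⟨hφu.1, hφu.2, hwφ.1, hwφ.2, identity,
    fun _ hl => ⟨memLp, compactSupport, memLp_qdL (hl.restrict _)⟩⟩
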